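/- Let V be a simple weight module with finite-dimensional weight spaces over the N=2 Ramond algebra 𝔤 which is neither a highest weight module nor a lowest weight module. Then for every nonzero integer n and every λ ∈ ℂ, the linear map from V_λ to V_{λ+n} ⊕ V_{λ+n} ⊕ V_{λ+n} ⊕ V_{λ+n} ⊕ V_{λ+n+1} given by v ↦ (L_n v, H_n v, G_n^+ v, G_n^- v, L_{n+1} v) is injective. -/

import Mathlib

open Submodule

/-- A module over the `N = 2` Ramond algebra `𝔤`: a `ℤ/2`-graded complex vector
space `V = even ⊕ odd` with parity-preserving operators `L m`, `H m`,
parity-reversing operators `Gp m` (`G_m^+`), `Gm m` (`G_m^-`), and a scalar `c₀`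
(the action of the central element `C`), subject to the defining relations. -/
structure RamondRep (V : Type) [AddCommGroup V] [Module ℂ V] : Type where
  L : ℤ → V →ₗ[ℂ] V
  H : ℤ → V →ₗ[ℂ] V
  Gp : ℤ → V →ₗ[ℂ] V
  Gm : ℤ → V →ₗ[ℂ] V
  c₀ : ℂ
  even : Submodule ℂ V
  odd : Submodule ℂ V
  grading : IsCompl even odd
  L_even : ∀ (m : ℤ), ∀ v ∈ even, L m v ∈ even
  L_odd : ∀ (m : ℤ), ∀ v ∈ odd, L m v ∈ odd
  H_even : ∀ (m : ℤ), ∀ v ∈ even, H m v ∈ even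
  H_odd : ∀ (m : ℤ), ∀ v ∈ odd, H m v ∈ odd
  Gp_even : ∀ (m : ℤ), ∀ v ∈ even, Gp m v ∈ odd
  Gp_odd : ∀ (m : ℤ), ∀ v ∈ odd, Gp m v ∈ even
  Gm_even : ∀ (m : ℤ), ∀ v ∈ even, Gm m v ∈ odd
  Gm_odd : ∀ (m : ℤ), ∀ v ∈ odd, Gm m v ∈ even
  rel_LL : ∀ (m n : ℤ) (v : V),
    L m (L n v) - L n (L m v) =
      ((n : ℂ) - (m : ℂ)) • L (m + n) v +
        ((1 / 12 : ℂ) * ((n : ℂ) ^ 3 - (n : ℂ)) *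
          (if m + n = 0 then (1 : ℂ) else 0) * c₀) • v
  rel_HH : ∀ (m n : ℤ) (v : V),
    H m (H n v) - H n (H m v) =
      ((1 / 3 : ℂ) * (m : ℂ) * (if m + n = 0 then (1 : ℂ) else 0) * c₀) • v
  rel_LH : ∀ (m n : ℤ) (v : V),
    L m (H n v) - H n (L m v) = (n : ℂ) • H (m + n) v
  rel_LGp : ∀ (m p : ℤ) (v : V),
    L m (Gp p v) - Gp p (L m v) = ((p : ℂ) - (m : ℂ) / 2) • Gp (p + m) v
  rel_LGm : ∀ (m p : ℤ) (v : V),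
    L m (Gm p v) - Gm p (L m v) = ((p : ℂ) - (m : ℂ) / 2) • Gm (p + m) v
  rel_HGp : ∀ (m p : ℤ) (v : V),
    H m (Gp p v) - Gp p (H m v) = Gp (m + p) v
  rel_HGm : ∀ (m p : ℤ) (v : V),
    H m (Gm p v) - Gm p (H m v) = -(Gm (m + p) v)
  rel_GpGm : ∀ (p q : ℤ) (v : V),
    Gp p (Gm q v) + Gm q (Gp p v) =
      (-2 : ℂ) • L (p + q) v + ((p : ℂ) - (q : ℂ)) • H (p + q) v +
        ((1 / 3 : ℂ) * ((p : ℂ) ^ 2 - 1 / 4) *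
          (if p + q = 0 then (1 : ℂ) else 0) * c₀) • v
  rel_GpGp : ∀ (p q : ℤ) (v : V), Gp p (Gp q v) + Gp q (Gp p v) = 0
  rel_GmGm : ∀ (p q : ℤ) (v : V), Gm p (Gm q v) + Gm q (Gm p v) = 0

namespace RamondRep

variable {V : Type} [AddCommGroup V] [Module ℂ V]

/-- The weight space `V_μ = {v ∈ V : L₀ v = μ v}`. -/
def wt (ρ : RamondRep V) (μ : ℂ) : Submodule ℂ V :=
  Module.End.eigenspace (ρ.L 0) μ

/-- The parity components, indexed by `ZMod 2`. -/
def parity (ρ : RamondRep V) (τ : ZMod 2) : Submodule ℂ V :=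
  if τ = 0 then ρ.even else ρ.odd

/-- `V` is a weight module: it is the sum of its weight spaces. -/
def IsWeight (ρ : RamondRep V) : Prop := (⨆ μ : ℂ, ρ.wt μ) = ⊤

/-- `V` is cuspidal: a weight module with uniformly bounded weight multiplicities
in each parity. -/
def Cuspidal (ρ : RamondRep V) : Prop :=
  ρ.IsWeight ∧ ∃ p : ℕ, ∀ (μ : ℂ) (τ : ZMod 2),
    Module.rank ℂ ↥(ρ.wt μ ⊓ ρ.parity τ) ≤ (p : Cardinal)

/-- A subspace invariant under all the operators. -/
def IsSubmod (ρ : RamondRep V) (W : Submodule ℂ V) : Prop :=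
  (∀ (m : ℤ), ∀ v ∈ W, ρ.L m v ∈ W) ∧ (∀ (m : ℤ), ∀ v ∈ W, ρ.H m v ∈ W) ∧
    (∀ (m : ℤ), ∀ v ∈ W, ρ.Gp m v ∈ W) ∧ (∀ (m : ℤ), ∀ v ∈ W, ρ.Gm m v ∈ W)

/-- A graded subspace invariant under all the operators. -/
def IsGradedSubmod (ρ : RamondRep V) (W : Submodule ℂ V) : Prop :=
  ρ.IsSubmod W ∧ W = (W ⊓ ρ.even) ⊔ (W ⊓ ρ.odd)

/-- The trivial representation: all operators act by zero. -/
def IsTrivialRep (ρ : RamondRep V) : Prop :=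
  ∀ (m : ℤ) (v : V), ρ.L m v = 0 ∧ ρ.H m v = 0 ∧ ρ.Gp m v = 0 ∧ ρ.Gm m v = 0

/-- `V` is simple: nontrivial, and its only graded submodules are `⊥` and `⊤`. -/
def IsSimple (ρ : RamondRep V) : Prop :=
  ¬ ρ.IsTrivialRep ∧
    ∀ W : Submodule ℂ V, ρ.IsGradedSubmod W → W = ⊥ ∨ W = ⊤

/-- `V` is generated by `v` as a `𝔤`-module. -/
def GeneratedBy (ρ : RamondRep V) (v : V) : Prop :=
  ∀ W : Submodule ℂ V, ρ.IsSubmod W → v ∈ W → W = ⊤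

/-- `V` is a highest weight module. -/
def IsHighestWeight (ρ : RamondRep V) : Prop :=
  ∃ v : V, v ≠ 0 ∧ ρ.GeneratedBy v ∧
    (∃ h h' : ℂ, ρ.L 0 v = h • v ∧ ρ.H 0 v = h' • v) ∧
    (∀ m : ℤ, 0 < m → ρ.L m v = 0 ∧ ρ.H m v = 0 ∧ ρ.Gp m v = 0 ∧ ρ.Gm m v = 0) ∧
    ρ.Gp 0 v = 0

/-- `V` is a lowest weight module. -/
def IsLowestWeight (ρ : RamondRep V) : Prop :=
  ∃ v : V, v ≠ 0 ∧ ρ.GeneratedBy v ∧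
    (∃ h h' : ℂ, ρ.L 0 v = h • v ∧ ρ.H 0 v = h' • v) ∧
    (∀ m : ℤ, m < 0 → ρ.L m v = 0 ∧ ρ.H m v = 0 ∧ ρ.Gp m v = 0 ∧ ρ.Gm m v = 0) ∧
    ρ.Gm 0 v = 0

end RamondRep

namespace RamondRep

variable {V : Type} [AddCommGroup V] [Module ℂ V]

/-- The vectors killed by all operators of mode at least `N`. -/
def K (ρ : RamondRep V) (N : ℤ) : Submodule ℂ V where
  carrier := {w | ∀ m : ℤ, N ≤ m →
    ρ.L m w = 0 ∧ ρ.H m w = 0 ∧ ρ.Gp m w = 0 ∧ ρ.Gm m w = 0}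
  zero_mem' := by intro m _; simp
  add_mem' := by
    intro a b ha hb m hm
    obtain ⟨h1, h2, h3, h4⟩ := ha m hm
    obtain ⟨k1, k2, k3, k4⟩ := hb m hm
    simp [h1, h2, h3, h4, k1, k2, k3, k4]
  smul_mem' := by
    intro c a ha m hm
    obtain ⟨h1, h2, h3, h4⟩ := ha m hm
    simp [h1, h2, h3, h4]

theorem mem_K (ρ : RamondRep V) (N : ℤ) (w : V) : w ∈ ρ.K N ↔ ∀ m : ℤ, N ≤ m →
    ρ.L m w = 0 ∧ ρ.H m w = 0 ∧ ρ.Gp m w = 0 ∧ ρ.Gm m w = 0 := Iff.rfl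

theorem K_mono (ρ : RamondRep V) {N N' : ℤ} (h : N ≤ N') : ρ.K N ≤ ρ.K N' :=
  fun _ hw m hm => hw m (h.trans hm)

theorem K_shift (ρ : RamondRep V) {N N' j : ℤ} (h1 : N ≤ N') (h2 : N ≤ N' + j)
    (h3 : 1 ≤ N' + j) {w : V} (hw : w ∈ ρ.K N) :
    ρ.L j w ∈ ρ.K N' ∧ ρ.H j w ∈ ρ.K N' ∧ ρ.Gp j w ∈ ρ.K N' ∧ ρ.Gm j w ∈ ρ.K N' := by
  have key : ∀ m : ℤ, N' ≤ m → (ρ.L m w = 0 ∧ ρ.H m w = 0 ∧ ρ.Gp m w = 0 ∧ ρ.Gm m w = 0) ∧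
      (ρ.L (m + j) w = 0 ∧ ρ.H (m + j) w = 0 ∧ ρ.Gp (m + j) w = 0 ∧ ρ.Gm (m + j) w = 0) ∧
      m + j ≠ 0 := fun m hm => ⟨hw m (by omega), hw _ (by omega), by omega⟩
  refine ⟨?_, ?_, ?_, ?_⟩ <;> intro m hm <;>
    obtain ⟨⟨a1, a2, a3, a4⟩, ⟨b1, b2, b3, b4⟩, h0⟩ := key m hm <;>
    have h0' : j + m ≠ 0 := by omega
  all_goals
    have b1' := b1
    have b2' := b2
    have b3' := b3
    have b4' := b4
    rw [add_comm m j] at b1' b2' b3' b4'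
  · refine ⟨?_, ?_, ?_, ?_⟩
    · have := ρ.rel_LL m j w
      simpa [a1, b1, h0] using this
    · have := ρ.rel_LH j m w
      simpa [a2, b2'] using this
    · have := ρ.rel_LGp j m w
      simpa [a3, b3] using this
    · have := ρ.rel_LGm j m w
      simpa [a4, b4] using this
  · refine ⟨?_, ?_, ?_, ?_⟩
    · have := ρ.rel_LH m j w
      simpa [a1, b2] using this
    · have := ρ.rel_HH m j w
      simpa [a2, h0] using this
    · have := ρ.rel_HGp j m w
      simpa [a3, b3'] using this
    · have := ρ.rel_HGm j m w
      simpa [a4, b4'] using this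
  · refine ⟨?_, ?_, ?_, ?_⟩
    · have := ρ.rel_LGp m j w
      simpa [a1, b3'] using this
    · have := ρ.rel_HGp m j w
      simpa [a2, b3] using this
    · have := ρ.rel_GpGp m j w
      simpa [a3] using this
    · have := ρ.rel_GpGm j m w
      simpa [a4, b1', b2', h0'] using this
  · refine ⟨?_, ?_, ?_, ?_⟩
    · have := ρ.rel_LGm m j w
      simpa [a1, b4'] using this
    · have := ρ.rel_HGm m j w
      simpa [a2, b4] using this
    · have := ρ.rel_GpGm m j w
      simpa [a3, b1, b2, h0] using this
    · have := ρ.rel_GmGm m j w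
      simpa [a4] using this

theorem eq_zero_of_split (ρ : RamondRep V) {e o : V} (he : e ∈ ρ.even) (ho : o ∈ ρ.odd)
    (h : e + o = 0) : e = 0 ∧ o = 0 := by
  have h1 : e = -o := eq_neg_of_add_eq_zero_left h
  have h2 : e ∈ ρ.odd := by rw [h1]; exact ρ.odd.neg_mem ho
  have h3 : e = 0 := Submodule.disjoint_def.1 ρ.grading.disjoint e he h2
  exact ⟨h3, by simpa [h3] using h⟩

theorem exists_split (ρ : RamondRep V) (w : V) : ∃ e ∈ ρ.even, ∃ o ∈ ρ.odd, e + o = w := by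
  have : w ∈ ρ.even ⊔ ρ.odd := by rw [ρ.grading.sup_eq_top]; trivial
  exact Submodule.mem_sup.1 this

theorem K_split (ρ : RamondRep V) {N : ℤ} {e o : V} (he : e ∈ ρ.even) (ho : o ∈ ρ.odd)
    (h : e + o ∈ ρ.K N) : e ∈ ρ.K N ∧ o ∈ ρ.K N := by
  have key : ∀ m : ℤ, N ≤ m → (ρ.L m e = 0 ∧ ρ.L m o = 0) ∧ (ρ.H m e = 0 ∧ ρ.H m o = 0) ∧
      (ρ.Gp m o = 0 ∧ ρ.Gp m e = 0) ∧ (ρ.Gm m o = 0 ∧ ρ.Gm m e = 0) := by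
    intro m hm
    obtain ⟨h1, h2, h3, h4⟩ := h m hm
    rw [map_add] at h1 h2 h3 h4
    rw [add_comm] at h3 h4
    exact ⟨ρ.eq_zero_of_split (ρ.L_even m e he) (ρ.L_odd m o ho) h1,
      ρ.eq_zero_of_split (ρ.H_even m e he) (ρ.H_odd m o ho) h2,
      ρ.eq_zero_of_split (ρ.Gp_odd m o ho) (ρ.Gp_even m e he) h3,
      ρ.eq_zero_of_split (ρ.Gm_odd m o ho) (ρ.Gm_even m e he) h4⟩
  exact ⟨fun m hm => ⟨(key m hm).1.1, (key m hm).2.1.1, (key m hm).2.2.1.2, (key m hm).2.2.2.2⟩,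
    fun m hm => ⟨(key m hm).1.2, (key m hm).2.1.2, (key m hm).2.2.1.1, (key m hm).2.2.2.1⟩⟩

theorem mem_wt (ρ : RamondRep V) (μ : ℂ) (w : V) : w ∈ ρ.wt μ ↔ ρ.L 0 w = μ • w :=
  Module.End.mem_eigenspace_iff

theorem wt_split (ρ : RamondRep V) {μ : ℂ} {e o : V} (he : e ∈ ρ.even) (ho : o ∈ ρ.odd)
    (h : e + o ∈ ρ.wt μ) : e ∈ ρ.wt μ ∧ o ∈ ρ.wt μ := by
  rw [mem_wt] at *
  have : (ρ.L 0 e - μ • e) + (ρ.L 0 o - μ • o) = 0 := by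
    rw [map_add, smul_add] at h
    rw [← sub_eq_zero] at h
    rw [← h]; abel
  obtain ⟨h1, h2⟩ := ρ.eq_zero_of_split (sub_mem (ρ.L_even 0 e he) (ρ.even.smul_mem μ he))
    (sub_mem (ρ.L_odd 0 o ho) (ρ.odd.smul_mem μ ho)) this
  exact ⟨sub_eq_zero.1 h1, by rw [mem_wt]; exact sub_eq_zero.1 h2⟩

theorem wt_shift (ρ : RamondRep V) {μ : ℂ} {w : V} (j : ℤ) (hw : w ∈ ρ.wt μ) :
    ρ.L j w ∈ ρ.wt (μ + j) ∧ ρ.H j w ∈ ρ.wt (μ + j) ∧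
    ρ.Gp j w ∈ ρ.wt (μ + j) ∧ ρ.Gm j w ∈ ρ.wt (μ + j) := by
  simp only [mem_wt] at *
  refine ⟨?_, ?_, ?_, ?_⟩
  · have := ρ.rel_LL 0 j w
    rw [hw, sub_eq_iff_eq_add] at this
    rw [this]
    by_cases hj : j = 0
    · subst hj; simp
    · simp [hj, add_smul, add_comm]
  · have := ρ.rel_LH 0 j w
    rw [hw, sub_eq_iff_eq_add] at this
    rw [this]
    simp [add_smul, add_comm]
  · have := ρ.rel_LGp 0 j w
    rw [hw, sub_eq_iff_eq_add] at this
    rw [this]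
    simp [add_smul, add_comm]
  · have := ρ.rel_LGm 0 j w
    rw [hw, sub_eq_iff_eq_add] at this
    rw [this]
    simp [add_smul, add_comm]

/-- In a simple module, a homogeneous nonzero vector generates everything. -/
theorem generated_of_homog (ρ : RamondRep V) (hs : ρ.IsSimple) {v : V} (hv : v ≠ 0)
    (hh : v ∈ ρ.even ∨ v ∈ ρ.odd) : ρ.GeneratedBy v := by
  intro W hW hvW
  obtain ⟨w1, w2, w3, w4⟩ := hW
  set W' : Submodule ℂ V := (W ⊓ ρ.even) ⊔ (W ⊓ ρ.odd) with hW'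
  have hle : W' ≤ W := sup_le inf_le_left inf_le_left
  have inE : ∀ x, x ∈ W → x ∈ ρ.even → x ∈ W' := fun x h1 h2 =>
    (le_sup_left : W ⊓ ρ.even ≤ W') ⟨h1, h2⟩
  have inO : ∀ x, x ∈ W → x ∈ ρ.odd → x ∈ W' := fun x h1 h2 =>
    (le_sup_right : W ⊓ ρ.odd ≤ W') ⟨h1, h2⟩
  have hg : ρ.IsGradedSubmod W' := by
    refine ⟨⟨?_, ?_, ?_, ?_⟩, ?_⟩
    · intro m x hx
      obtain ⟨e, he, o, ho, rfl⟩ := Submodule.mem_sup.1 hx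
      rw [map_add]
      exact add_mem (inE _ (w1 m e he.1) (ρ.L_even m e he.2))
        (inO _ (w1 m o ho.1) (ρ.L_odd m o ho.2))
    · intro m x hx
      obtain ⟨e, he, o, ho, rfl⟩ := Submodule.mem_sup.1 hx
      rw [map_add]
      exact add_mem (inE _ (w2 m e he.1) (ρ.H_even m e he.2))
        (inO _ (w2 m o ho.1) (ρ.H_odd m o ho.2))
    · intro m x hx
      obtain ⟨e, he, o, ho, rfl⟩ := Submodule.mem_sup.1 hx
      rw [map_add]
      exact add_mem (inO _ (w3 m e he.1) (ρ.Gp_even m e he.2))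
        (inE _ (w3 m o ho.1) (ρ.Gp_odd m o ho.2))
    · intro m x hx
      obtain ⟨e, he, o, ho, rfl⟩ := Submodule.mem_sup.1 hx
      rw [map_add]
      exact add_mem (inO _ (w4 m e he.1) (ρ.Gm_even m e he.2))
        (inE _ (w4 m o ho.1) (ρ.Gm_odd m o ho.2))
    · apply le_antisymm
      · apply sup_le
        · exact le_trans (le_inf le_sup_left inf_le_right) le_sup_left
        · exact le_trans (le_inf le_sup_right inf_le_right) le_sup_right
      · exact sup_le inf_le_left inf_le_left
  have hvW' : v ∈ W' := hh.elim (inE v hvW) (inO v hvW)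
  rcases hs.2 W' hg with h | h
  · rw [h, Submodule.mem_bot] at hvW'
    exact absurd hvW' hv
  · rw [h] at hle
    exact top_le_iff.1 hle

/-- In a simple module with a nonzero vector killed by high modes, every vector is. -/
theorem locally_killed (ρ : RamondRep V) (hs : ρ.IsSimple) {N : ℤ} {v : V} (hv : v ≠ 0)
    (hvN : v ∈ ρ.K N) (w : V) : ∃ N', w ∈ ρ.K N' := by
  let W : Submodule ℂ V :=
    { carrier := {w | ∃ N', w ∈ ρ.K N'}
      zero_mem' := ⟨0, zero_mem _⟩
      add_mem' := by
        rintro a b ⟨A, hA⟩ ⟨B, hB⟩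
        exact ⟨max A B, add_mem (ρ.K_mono (le_max_left _ _) hA) (ρ.K_mono (le_max_right _ _) hB)⟩
      smul_mem' := by
        rintro c a ⟨A, hA⟩
        exact ⟨A, Submodule.smul_mem _ c hA⟩ }
  have sh : ∀ (j : ℤ) (x : V), x ∈ W → ρ.L j x ∈ W ∧ ρ.H j x ∈ W ∧ ρ.Gp j x ∈ W ∧ ρ.Gm j x ∈ W := by
    rintro j x ⟨A, hA⟩
    obtain ⟨h1, h2, h3, h4⟩ := ρ.K_shift (N' := |A| + |j| + 1) (j := j)
      (by have := le_abs_self A; have := abs_nonneg j; omega)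
      (by have := le_abs_self A; have := neg_abs_le j; omega)
      (by have := abs_nonneg A; have := neg_abs_le j; omega) hA
    exact ⟨⟨_, h1⟩, ⟨_, h2⟩, ⟨_, h3⟩, ⟨_, h4⟩⟩
  have hg : ρ.IsGradedSubmod W := by
    refine ⟨⟨fun m x hx => (sh m x hx).1, fun m x hx => (sh m x hx).2.1,
      fun m x hx => (sh m x hx).2.2.1, fun m x hx => (sh m x hx).2.2.2⟩, ?_⟩
    apply le_antisymm
    · rintro x ⟨A, hA⟩
      obtain ⟨e, he, o, ho, rfl⟩ := ρ.exists_split x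
      obtain ⟨h1, h2⟩ := ρ.K_split he ho hA
      exact Submodule.mem_sup.2 ⟨e, ⟨⟨A, h1⟩, he⟩, o, ⟨⟨A, h2⟩, ho⟩, rfl⟩
    · exact sup_le inf_le_left inf_le_left
  rcases hs.2 W hg with h | h
  · have : v ∈ W := ⟨N, hvN⟩
    rw [h, Submodule.mem_bot] at this
    exact absurd this hv
  · have : w ∈ W := by rw [h]; trivial
    exact this

theorem wt_le_K (ρ : RamondRep V) (hall : ∀ w : V, ∃ N', w ∈ ρ.K N') (μ : ℂ)
    (hfin : FiniteDimensional ℂ ↥(ρ.wt μ)) : ∃ N', ρ.wt μ ≤ ρ.K N' := by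
  have hfg : (ρ.wt μ).FG := Module.Finite.iff_fg.1 hfin
  obtain ⟨S, hS⟩ := hfg
  choose f hf using hall
  obtain ⟨M, hM⟩ := (S.image f).exists_le
  refine ⟨M, ?_⟩
  rw [← hS, Submodule.span_le]
  intro x hx
  exact ρ.K_mono (hM _ (Finset.mem_image_of_mem f hx)) (hf x)

theorem vanish (ρ : RamondRep V) {μ : ℂ} {N N' k : ℤ} (hμ : ρ.wt μ ≤ ρ.K N')
    (h1 : 2 ≤ k) (h2 : N + 1 ≤ k) (h3 : N' + 1 ≤ k) (hk : μ + k ≠ 0) {w : V}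
    (hw : w ∈ ρ.K N) (hwt : w ∈ ρ.wt (μ + k)) : w = 0 := by
  have hm : ρ.L (-k) w ∈ ρ.wt μ := by
    have := (ρ.wt_shift (-k) hwt).1
    simpa using this
  have hm' := hμ hm
  have key : ∀ i : ℤ, i ≠ 0 → -1 ≤ i → i ≤ 1 → ρ.L i w = 0 := by
    intro i hi hi1 hi2
    have e1 := (hw (k + i) (by omega)).1
    have e2 := (hm' (k + i) (by omega)).1
    have := ρ.rel_LL (k + i) (-k) w
    rw [e1, e2] at this
    have hi' : k + i + -k = i := by ring
    rw [hi'] at this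
    simp only [map_zero, sub_zero, hi, if_false, mul_zero, zero_mul, zero_smul, add_zero] at this
    rcases smul_eq_zero.1 this.symm with h | h
    · exfalso
      have h' : ((-k - (k + i) : ℤ) : ℂ) = 0 := by rw [← h]; push_cast; ring
      have := Int.cast_eq_zero.1 h'
      omega
    · exact h
  have p := key 1 (by norm_num) (by norm_num) (by norm_num)
  have q := key (-1) (by norm_num) (by norm_num) (by norm_num)
  have := ρ.rel_LL 1 (-1) w
  rw [p, q] at this
  norm_num at this
  rw [mem_wt, this] at hwt
  rcases smul_eq_zero.1 hwt.symm with h | h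
  · exact absurd h hk
  · exact h

theorem highest_of_killed (ρ : RamondRep V) (hfin : ∀ μ : ℂ, FiniteDimensional ℂ ↥(ρ.wt μ))
    (hs : ρ.IsSimple) {N : ℤ} (hN : 1 ≤ N) {μ : ℂ} {v : V} (hv : v ≠ 0) (hvN : v ∈ ρ.K N)
    (hvμ : v ∈ ρ.wt μ) : ρ.IsHighestWeight := by
  obtain ⟨N', hN'⟩ := ρ.wt_le_K (ρ.locally_killed hs hv hvN) μ (hfin μ)
  let S : Set ℕ := {k | ∃ w : V, w ≠ 0 ∧ w ∈ ρ.K N ∧ w ∈ ρ.wt (μ + (k : ℤ))}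
  have hS0 : (0 : ℕ) ∈ S := ⟨v, hv, hvN, by simpa using hvμ⟩
  have hSb : BddAbove S := by
    have hfinS : S ⊆ Set.Iic (N.toNat + N'.toNat + 2) ∪ {k : ℕ | μ + (k : ℤ) = 0} := by
      rintro k ⟨w, hw0, hw1, hw2⟩
      by_contra hc
      simp only [Set.mem_union, Set.mem_Iic, Set.mem_setOf_eq, not_or, not_le] at hc
      exact hw0 (ρ.vanish hN' (k := (k : ℤ)) (by omega) (by omega) (by omega) hc.2 hw1 hw2)
    refine BddAbove.mono hfinS (BddAbove.union bddAbove_Iic (Set.Finite.bddAbove ?_))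
    apply Set.Subsingleton.finite
    intro a ha b hb
    simp only [Set.mem_setOf_eq, Int.cast_natCast] at ha hb
    have : (a : ℂ) = b := by rw [← hb] at ha; exact add_left_cancel ha
    exact_mod_cast this
  obtain ⟨w, hw0, hwK, hww⟩ := Nat.sSup_mem ⟨0, hS0⟩ hSb
  set k := sSup S with hk
  have top : ∀ x, x ∈ ρ.K N → x ∈ ρ.wt (μ + (k : ℤ)) → ∀ m : ℤ, 0 < m →
      ρ.L m x = 0 ∧ ρ.H m x = 0 ∧ ρ.Gp m x = 0 ∧ ρ.Gm m x = 0 := by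
    intro x hx hxw m hm
    obtain ⟨a1, a2, a3, a4⟩ := ρ.K_shift (N' := N) (j := m) le_rfl (by omega) (by omega) hx
    obtain ⟨b1, b2, b3, b4⟩ := ρ.wt_shift m hxw
    have hcast : μ + ((k : ℤ) : ℂ) + (m : ℂ) = μ + (((k + m.toNat : ℕ) : ℤ) : ℂ) := by
      have : (((k + m.toNat : ℕ) : ℤ)) = (k : ℤ) + m := by omega
      rw [this]; push_cast; ring
    rw [hcast] at b1 b2 b3 b4
    have z : ∀ y, y ∈ ρ.K N → y ∈ ρ.wt (μ + (((k + m.toNat : ℕ) : ℤ) : ℂ)) → y = 0 := by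
      intro y h1 h2
      by_contra h3
      have := le_csSup hSb (show k + m.toNat ∈ S from ⟨y, h3, h1, h2⟩)
      omega
    exact ⟨z _ a1 b1, z _ a2 b2, z _ a3 b3, z _ a4 b4⟩
  -- a homogeneous piece
  have hP : ∃ P : Submodule ℂ V, (P = ρ.even ∨ P = ρ.odd) ∧
      ∃ x, x ≠ 0 ∧ x ∈ ρ.K N ∧ x ∈ ρ.wt (μ + (k : ℤ)) ∧ x ∈ P := by
    obtain ⟨e, he, o, ho, rfl⟩ := ρ.exists_split w
    obtain ⟨h1, h2⟩ := ρ.K_split he ho hwK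
    obtain ⟨h3, h4⟩ := ρ.wt_split he ho hww
    by_cases h : e = 0
    · exact ⟨ρ.odd, Or.inr rfl, o, by rintro rfl; simp [h] at hw0, h2, h4, ho⟩
    · exact ⟨ρ.even, Or.inl rfl, e, h, h1, h3, he⟩
  obtain ⟨P, hPe, x, hx0, hxK, hxw, hxP⟩ := hP
  have HP : ∀ y ∈ P, ρ.H 0 y ∈ P := by
    rcases hPe with rfl | rfl
    · exact ρ.H_even 0
    · exact ρ.H_odd 0
  let E : Submodule ℂ V := ρ.wt (μ + (k : ℤ)) ⊓ (ρ.K N ⊓ P)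
  have hE : ∀ y ∈ E, ρ.H 0 y ∈ E := by
    rintro y ⟨h1, h2, h3⟩
    refine ⟨?_, (ρ.K_shift (N' := N) (j := 0) le_rfl (by omega) (by omega) h2).2.1, HP y h3⟩
    have := (ρ.wt_shift 0 h1).2.1
    simpa using this
  haveI : FiniteDimensional ℂ ↥(ρ.wt (μ + (k : ℤ))) := hfin _
  haveI : FiniteDimensional ℂ ↥E := Submodule.finiteDimensional_of_le (inf_le_left : E ≤ _)
  haveI : Nontrivial ↥E := ⟨⟨⟨x, hxw, hxK, hxP⟩, 0, by
    intro h; exact hx0 (congrArg Subtype.val h)⟩⟩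
  obtain ⟨h', hh'⟩ := Module.End.exists_eigenvalue ((ρ.H 0).restrict hE)
  obtain ⟨⟨u, huw, huK, huP⟩, hu⟩ := hh'.exists_hasEigenvector
  have hu0 : u ≠ 0 := fun h => hu.2 (Subtype.ext h)
  have huH : ρ.H 0 u = h' • u := congrArg Subtype.val hu.apply_eq_smul
  have huh : u ∈ ρ.even ∨ u ∈ ρ.odd := by
    rcases hPe with rfl | rfl
    · exact Or.inl huP
    · exact Or.inr huP
  by_cases hG : ρ.Gp 0 u = 0
  · exact ⟨u, hu0, ρ.generated_of_homog hs hu0 huh, ⟨_, h', (ρ.mem_wt _ _).1 huw, huH⟩,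
      top u huK huw, hG⟩
  · have gK := (ρ.K_shift (N' := N) (j := 0) le_rfl (by omega) (by omega) huK).2.2.1
    have gw : ρ.Gp 0 u ∈ ρ.wt (μ + (k : ℤ)) := by
      have := (ρ.wt_shift 0 huw).2.2.1
      simpa using this
    refine ⟨ρ.Gp 0 u, hG, ρ.generated_of_homog hs hG ?_,
      ⟨_, h' + 1, (ρ.mem_wt _ _).1 gw, ?_⟩, top _ gK gw, ?_⟩
    · rcases huh with h | h
      · exact Or.inr (ρ.Gp_even 0 u h)
      · exact Or.inl (ρ.Gp_odd 0 u h)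
    · have := ρ.rel_HGp 0 0 u
      rw [huH, sub_eq_iff_eq_add] at this
      rw [this]
      simp [add_smul, add_comm]
    · have := ρ.rel_GpGp 0 0 u
      rw [← two_smul ℂ] at this
      exact (smul_eq_zero.1 this).resolve_left two_ne_zero

/-- `L_a v = L_{a+1} v = 0` with `a ≥ 1` kills all high Virasoro modes. -/
theorem L_killed (ρ : RamondRep V) {a : ℤ} (ha : 1 ≤ a) {v : V} (h1 : ρ.L a v = 0)
    (h2 : ρ.L (a + 1) v = 0) : ∀ m : ℤ, a * (2 * a + 1) ≤ m → ρ.L m v = 0 := by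
  have add : ∀ p q : ℤ, 1 ≤ p → p < q → ρ.L p v = 0 → ρ.L q v = 0 → ρ.L (p + q) v = 0 := by
    intro p q hp hpq e1 e2
    have := ρ.rel_LL p q v
    have h0 : p + q ≠ 0 := by omega
    rw [e1, e2] at this
    simp only [map_zero, sub_zero, h0, if_false, mul_zero, zero_mul, zero_smul, add_zero] at this
    refine (smul_eq_zero.1 this.symm).resolve_left ?_
    intro h
    have h' : ((q - p : ℤ) : ℂ) = 0 := by rw [← h]; push_cast; ring
    have := Int.cast_eq_zero.1 h'
    omega
  have s1 : ∀ i : ℕ, ρ.L (((i : ℤ) + 1) * a + (a + 1)) v = 0 := by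
    intro i
    induction i with
    | zero =>
      have := add a (a + 1) ha (by omega) h1 h2
      simpa using this
    | succ i ih =>
      have := add a _ ha (by nlinarith) h1 ih
      convert this using 3
      push_cast; ring
  have s2 : ∀ i j : ℕ, ρ.L (((i : ℤ) + 1) * a + ((j : ℤ) + 1) * (a + 1)) v = 0 := by
    intro i j
    induction j with
    | zero => simpa using s1 i
    | succ j ih =>
      have := add (a + 1) _ (by omega) (by nlinarith) h2 ih
      convert this using 3
      push_cast; ring
  intro m hm
  have hq : 2 * a + 1 ≤ m / a := by
    rw [Int.le_ediv_iff_mul_le (by omega)]; linarith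
  have hr1 := Int.emod_nonneg m (show a ≠ 0 by omega)
  have hr2 := Int.emod_lt_of_pos m (show 0 < a by omega)
  have hm2 := Int.mul_ediv_add_emod m a
  have := s2 (m / a - 2 - m % a - a).toNat (m % a + a - 1).toNat
  rw [Int.toNat_of_nonneg (by omega), Int.toNat_of_nonneg (by omega)] at this
  convert this using 3
  linear_combination -hm2

theorem killed (ρ : RamondRep V) {n a : ℤ} (hn : n ≠ 0) (ha : 1 ≤ a) {v : V}
    (h1 : ρ.L a v = 0) (h2 : ρ.L (a + 1) v = 0) (hH : ρ.H n v = 0) (hp : ρ.Gp n v = 0)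
    (hq : ρ.Gm n v = 0) : ∃ N : ℤ, 1 ≤ N ∧ v ∈ ρ.K N := by
  have hL := ρ.L_killed ha h1 h2
  set M := a * (2 * a + 1)
  have hHH : ∀ m, M + n ≤ m → ρ.H m v = 0 := by
    intro m hm
    have := ρ.rel_LH (m - n) n v
    rw [hL (m - n) (by omega), hH, sub_add_cancel] at this
    simpa [hn] using this.symm
  have hGp : ∀ m, M + n + n ≤ m → ρ.Gp m v = 0 := by
    intro m hm
    have := ρ.rel_HGp (m - n) n v
    rw [hHH (m - n) (by omega), hp, sub_add_cancel] at this
    simpa using this.symm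
  have hGm : ∀ m, M + n + n ≤ m → ρ.Gm m v = 0 := by
    intro m hm
    have := ρ.rel_HGm (m - n) n v
    rw [hHH (m - n) (by omega), hq, sub_add_cancel] at this
    simpa using this.symm
  refine ⟨max 1 (|M| + |n| + |n|), le_max_left _ _, fun m hm => ?_⟩
  have hm' := (le_max_right _ _).trans hm
  have := le_abs_self M
  have := le_abs_self n
  have := abs_nonneg n
  exact ⟨hL m (by omega), hHH m (by omega), hGp m (by omega), hGm m (by omega)⟩

theorem pos_case (ρ : RamondRep V) (hfin : ∀ μ : ℂ, FiniteDimensional ℂ ↥(ρ.wt μ))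
    (hs : ρ.IsSimple) (hnothw : ¬ ρ.IsHighestWeight) {n : ℤ} (hn : 0 < n) {μ : ℂ} {v : V}
    (hv : v ∈ ρ.wt μ) (hL : ρ.L n v = 0) (hH : ρ.H n v = 0) (hp : ρ.Gp n v = 0)
    (hq : ρ.Gm n v = 0) (h : ρ.L (n + 1) v = 0 ∨ ρ.L (n - 1) v = 0) : v = 0 := by
  by_contra hv0
  have hex : ∃ a : ℤ, 1 ≤ a ∧ ρ.L a v = 0 ∧ ρ.L (a + 1) v = 0 := by
    rcases h with h | h
    · exact ⟨n, hn, hL, h⟩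
    · by_cases h1 : n = 1
      · subst h1
        refine ⟨1, le_rfl, hL, ?_⟩
        have := ρ.rel_GpGm 1 1 v
        rw [hp, hq] at this
        simpa using this
      · exact ⟨n - 1, by omega, h, by simpa using hL⟩
  obtain ⟨a, ha, h1, h2⟩ := hex
  obtain ⟨N, hN, hK⟩ := ρ.killed (by omega) ha h1 h2 hH hp hq
  exact hnothw (ρ.highest_of_killed hfin hs hN hv0 hK hv)

/-- The representation twisted by the involution reversing modes. -/
def flip (ρ : RamondRep V) : RamondRep V where
  L m := -ρ.L (-m)
  H m := -ρ.H (-m)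
  Gp m := ρ.Gm (-m)
  Gm m := -ρ.Gp (-m)
  c₀ := -ρ.c₀
  even := ρ.even
  odd := ρ.odd
  grading := ρ.grading
  L_even m v hv := neg_mem (ρ.L_even (-m) v hv)
  L_odd m v hv := neg_mem (ρ.L_odd (-m) v hv)
  H_even m v hv := neg_mem (ρ.H_even (-m) v hv)
  H_odd m v hv := neg_mem (ρ.H_odd (-m) v hv)
  Gp_even m v hv := ρ.Gm_even (-m) v hv
  Gp_odd m v hv := ρ.Gm_odd (-m) v hv
  Gm_even m v hv := neg_mem (ρ.Gp_even (-m) v hv)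
  Gm_odd m v hv := neg_mem (ρ.Gp_odd (-m) v hv)
  rel_LL m n v := by
    have h := ρ.rel_LL (-m) (-n) v
    have e : -m + -n = -(m + n) := by ring
    simp only [e, neg_eq_zero] at h
    simp only [LinearMap.neg_apply, map_neg, neg_neg]
    rw [h]; push_cast; module
  rel_HH m n v := by
    have h := ρ.rel_HH (-m) (-n) v
    have e : -m + -n = -(m + n) := by ring
    simp only [e, neg_eq_zero] at h
    simp only [LinearMap.neg_apply, map_neg, neg_neg]
    rw [h]; push_cast; module
  rel_LH m n v := by
    have h := ρ.rel_LH (-m) (-n) v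
    have e : -m + -n = -(m + n) := by ring
    simp only [e] at h
    simp only [LinearMap.neg_apply, map_neg, neg_neg]
    rw [h]; push_cast; module
  rel_LGp m p v := by
    have h := ρ.rel_LGm (-m) (-p) v
    have e : -p + -m = -(p + m) := by ring
    simp only [e] at h
    simp only [LinearMap.neg_apply, map_neg]
    rw [← neg_sub', h]; push_cast; module
  rel_LGm m p v := by
    have h := ρ.rel_LGp (-m) (-p) v
    have e : -p + -m = -(p + m) := by ring
    simp only [e] at h
    simp only [LinearMap.neg_apply, map_neg, neg_neg]
    rw [h]; push_cast; module
  rel_HGp m p v := by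
    have h := ρ.rel_HGm (-m) (-p) v
    have e : -m + -p = -(m + p) := by ring
    simp only [e] at h
    simp only [LinearMap.neg_apply, map_neg]
    rw [← neg_sub', h]; module
  rel_HGm m p v := by
    have h := ρ.rel_HGp (-m) (-p) v
    have e : -m + -p = -(m + p) := by ring
    simp only [e] at h
    simp only [LinearMap.neg_apply, map_neg, neg_neg]
    rw [h]
  rel_GpGm p q v := by
    have h := ρ.rel_GpGm (-q) (-p) v
    have e : -q + -p = -(p + q) := by ring
    simp only [e, neg_eq_zero] at h
    simp only [LinearMap.neg_apply, map_neg]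
    rw [← neg_add, add_comm, h]
    by_cases h0 : p + q = 0
    · obtain rfl : q = -p := by omega
      push_cast; module
    · simp only [h0, if_false]
      push_cast; module
  rel_GpGp p q v := ρ.rel_GmGm (-p) (-q) v
  rel_GmGm p q v := by
    have h := ρ.rel_GpGp (-p) (-q) v
    simpa using h

theorem flip_wt (ρ : RamondRep V) (μ : ℂ) : ρ.flip.wt μ = ρ.wt (-μ) := by
  ext w
  rw [mem_wt, mem_wt]
  simp only [flip, LinearMap.neg_apply, neg_zero, neg_smul]
  exact neg_eq_iff_eq_neg

theorem flip_isSubmod (ρ : RamondRep V) (W : Submodule ℂ V) :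
    ρ.flip.IsSubmod W ↔ ρ.IsSubmod W := by
  simp only [IsSubmod, flip, LinearMap.neg_apply, neg_mem_iff]
  have key : ∀ X : ℤ → V →ₗ[ℂ] V, (∀ m : ℤ, ∀ v ∈ W, X (-m) v ∈ W) ↔
      ∀ m : ℤ, ∀ v ∈ W, X m v ∈ W := fun X =>
    ⟨fun h m => by simpa using h (-m), fun h m => h (-m)⟩
  rw [key ρ.L, key ρ.H, key ρ.Gp, key ρ.Gm]
  tauto

theorem flip_isSimple (ρ : RamondRep V) (hs : ρ.IsSimple) : ρ.flip.IsSimple := by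
  refine ⟨fun h => hs.1 fun m v => ?_, fun W hW => hs.2 W ⟨(ρ.flip_isSubmod W).1 hW.1, hW.2⟩⟩
  have := h (-m) v
  simp only [flip, LinearMap.neg_apply, neg_neg, neg_eq_zero] at this
  tauto

theorem flip_highest (ρ : RamondRep V) (h : ρ.flip.IsHighestWeight) : ρ.IsLowestWeight := by
  obtain ⟨v, hv, hg, ⟨a, b, ha, hb⟩, hm, h0⟩ := h
  refine ⟨v, hv, fun W hW => hg W ((ρ.flip_isSubmod W).2 hW), ⟨-a, -b, ?_, ?_⟩, ?_, ?_⟩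
  · simp only [flip, LinearMap.neg_apply, neg_zero] at ha
    rw [neg_smul, ← ha, neg_neg]
  · simp only [flip, LinearMap.neg_apply, neg_zero] at hb
    rw [neg_smul, ← hb, neg_neg]
  · intro m hm0
    have := hm (-m) (by omega)
    simp only [flip, LinearMap.neg_apply, neg_neg, neg_eq_zero] at this
    tauto
  · simpa [flip] using h0

end RamondRep

/-- for a simple weight module with finite-dimensional weight spaces
over the `N = 2` Ramond algebra which is neither highest nor lowest weight, for any
`n ≠ 0` and any weight `μ` the map
`v ↦ (L_n v, H_n v, G_n^+ v, G_n^- v, L_{n+1} v)` is injective on `V_μ`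
(equivalently, its kernel on `V_μ` is zero). -/
theorem stmt2 {V : Type} [AddCommGroup V] [Module ℂ V] (ρ : RamondRep V)
    (hweight : ρ.IsWeight) (hfin : ∀ μ : ℂ, FiniteDimensional ℂ ↥(ρ.wt μ))
    (hsimple : ρ.IsSimple)
    (hnothw : ¬ ρ.IsHighestWeight) (hnotlw : ¬ ρ.IsLowestWeight) :
    ∀ n : ℤ, n ≠ 0 → ∀ μ : ℂ, ∀ v ∈ ρ.wt μ,
      ρ.L n v = 0 → ρ.H n v = 0 → ρ.Gp n v = 0 → ρ.Gm n v = 0 →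
        ρ.L (n + 1) v = 0 → v = 0 := by
  intro n hn μ v hv h1 h2 h3 h4 h5
  rcases lt_or_gt_of_ne hn with hneg | hpos
  · refine ρ.flip.pos_case (n := -n) (μ := -μ) ?_ (ρ.flip_isSimple hsimple)
      (fun h => hnotlw (ρ.flip_highest h)) (by omega) ?_ ?_ ?_ ?_ ?_ (Or.inr ?_)
    · intro ν
      rw [ρ.flip_wt]
      exact hfin _
    · rw [ρ.flip_wt, neg_neg]
      exact hv
    · simpa [RamondRep.flip] using h1
    · simpa [RamondRep.flip] using h2
    · simpa [RamondRep.flip] using h4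
    · simpa [RamondRep.flip] using h3
    · have e : -(-n - 1) = n + 1 := by ring
      simp [RamondRep.flip, e, h5, -neg_sub]
  · exact ρ.pos_case hfin hsimple hnothw hpos hv h1 h2 h3 h4 (Or.inl h5)
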